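/- arXiv:math/0603503 — 3 statements merged into one kernel-verified Lean document; each statement's English description precedes it below -/
import Mathlib

section
/- The 2×2 complex matrices P_1 = [[1,0],[0,0]], P_2 = [[1/4, √3/4],[√3/4, 3/4]], P_3 = [[1/4, −√3/4],[−√3/4, 3/4]] are orthogonal projections (self-adjoint idempotents) on ℂ² satisfying P_1 + P_2 + P_3 = (3/2)·I, and the triple (P_1, P_2, P_3) is irreducible: the only self-adjoint idempotent 2×2 matrices commuting with P_1, P_2, and P_3 are 0 and I. -/
open Matrix

/-!
A `2 × 2` matrix of trace one and determinant zero is idempotent by Cayley–Hamilton. A matrix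
commuting with `P₁`, which is diagonal with distinct entries, is diagonal; if it also commutes with
`P₂`, whose off-diagonal entries are nonzero, then it is scalar, and a scalar idempotent is `0`
or `1`.
-/

theorem isIdempotentElem_of_trace_eq_one_of_det_eq_zero {R : Type*} [CommRing R]
    {A : Matrix (Fin 2) (Fin 2) R} (htr : A.trace = 1) (hdet : A.det = 0) :
    IsIdempotentElem A := by
  nontriviality R
  have cayley_hamilton : A ^ 2 - A = 0 := by
    simpa [charpoly_fin_two, htr, hdet] using aeval_self_charpoly A
  rw [IsIdempotentElem, ← sq]
  exact sub_eq_zero.mp cayley_hamilton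

theorem isStarProjection_fin_two_of {R : Type*} [CommRing R] [StarRing R] {a b d : R}
    (ha : IsSelfAdjoint a) (hb : IsSelfAdjoint b) (htr : a + d = 1) (hdet : a * d - b * b = 0) :
    IsStarProjection !![a, b; b, d] where
  isIdempotentElem := isIdempotentElem_of_trace_eq_one_of_det_eq_zero
    ((trace_fin_two_of a b b d).trans htr) ((det_fin_two_of a b b d).trans hdet)
  isSelfAdjoint := by
    have hd : IsSelfAdjoint d := eq_sub_of_add_eq' htr ▸ (IsSelfAdjoint.one R).sub ha
    refine IsHermitian.ext fun i j => ?_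
    fin_cases i <;> fin_cases j
    exacts [ha, hb, hb, hd]

section Commutant

variable {n R : Type*} [Fintype n] [DecidableEq n] [CommRing R] [NoZeroDivisors R]
  {A B : Matrix n n R} {d : n → R}

theorem isDiag_of_commute_diagonal (hd : Function.Injective d) (hA : Commute A (diagonal d)) :
    A.IsDiag := by
  intro i j hij
  have hentry : A i j * d j = d i * A i j := by
    simpa only [mul_diagonal, diagonal_mul] using congr_fun₂ hA.eq i j
  have hmul : (d j - d i) * A i j = 0 := by linear_combination hentry
  exact (mul_eq_zero.mp hmul).resolve_left (sub_ne_zero.mpr (hd.ne hij.symm))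

theorem apply_eq_of_commute_diagonal {i j : n} (hB : Commute (diagonal d) B) (hij : B i j ≠ 0) :
    d i = d j := by
  have hentry : d i * B i j = B i j * d j := by
    simpa only [mul_diagonal, diagonal_mul] using congr_fun₂ hB.eq i j
  exact mul_right_cancel₀ hij (hentry.trans (mul_comm _ _))

theorem mem_range_scalar_of_commute_diagonal {i : n} (hd : Function.Injective d)
    (hB : ∀ j ≠ i, B i j ≠ 0) (hAd : Commute A (diagonal d)) (hAB : Commute A B) :
    A ∈ Set.range (scalar n) := by
  have hA : diagonal A.diag = A := (isDiag_of_commute_diagonal hd hAd).diagonal_diag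
  have hconst : ∀ j, A.diag i = A.diag j := fun j => by
    obtain rfl | hj := eq_or_ne j i
    · rfl
    · exact apply_eq_of_commute_diagonal (hA.symm ▸ hAB) (hB j hj)
  exact ⟨A.diag i, (congr_arg diagonal (funext hconst)).trans hA⟩

theorem eq_zero_or_one_of_isIdempotentElem_of_mem_range_scalar
    (hA : IsIdempotentElem A) (hscalar : A ∈ Set.range (scalar n)) : A = 0 ∨ A = 1 := by
  cases isEmpty_or_nonempty n
  · exact .inl (Subsingleton.elim _ _)
  obtain ⟨c, rfl⟩ := hscalar
  have hc : IsIdempotentElem c := scalar_inj.mp ((map_mul (scalar n) c c).trans hA)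
  exact (IsIdempotentElem.iff_eq_zero_or_one.mp hc).imp
    (fun h => by rw [h, map_zero]) (fun h => by rw [h, map_one])

end Commutant

theorem stmt_12_general {K : Type*} [Field K] [StarRing K] [NeZero (2 : K)] [NeZero (3 : K)]
    {s : K} (hs : s ^ 2 = 3) (hstar : IsSelfAdjoint s) :
    let P₁ : Matrix (Fin 2) (Fin 2) K := !![1, 0; 0, 0]
    let P₂ : Matrix (Fin 2) (Fin 2) K := !![1/4, s/4; s/4, 3/4]
    let P₃ : Matrix (Fin 2) (Fin 2) K := !![1/4, -s/4; -s/4, 3/4]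
    IsStarProjection P₁ ∧ IsStarProjection P₂ ∧ IsStarProjection P₃ ∧
    P₁ + P₂ + P₃ = (3/2 : K) • (1 : Matrix (Fin 2) (Fin 2) K) ∧
    (∀ R : Matrix (Fin 2) (Fin 2) K, IsIdempotentElem R → Commute R P₁ → Commute R P₂ →
      R = 0 ∨ R = 1) := by
  intro P₁ P₂ P₃
  have hfour : (4 : K) ≠ 0 := by
    simpa only [show (4 : K) = 2 * 2 by norm_num] using mul_ne_zero two_ne_zero two_ne_zero
  have hs0 : s ≠ 0 := ne_zero_pow two_ne_zero (hs ▸ three_ne_zero)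
  have hproj {t : K} (ht : t ^ 2 = 3) (htstar : IsSelfAdjoint t) :
      IsStarProjection !![1/4, t/4; t/4, 3/4] := by
    refine isStarProjection_fin_two_of ((IsSelfAdjoint.one K).div (.ofNat 4))
      (htstar.div (.ofNat 4)) ?_ ?_
    · field_simp
      norm_num
    · linear_combination -(1 / 4) ^ 2 * ht
  refine ⟨isStarProjection_fin_two_of (.one K) (.zero K) (by ring) (by ring),
    hproj hs hstar, hproj ((neg_sq s).trans hs) hstar.neg, ?_, fun R hR hR₁ hR₂ => ?_⟩
  · have hdiag₀ : 1 + 1 / 4 + 1 / 4 = (3 / 2 : K) := by field_simp; norm_num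
    have hdiag₁ : 3 / 4 + 3 / 4 = (3 / 2 : K) := by field_simp; norm_num
    simp [P₁, P₂, P₃, one_fin_two, -one_div, hdiag₀, hdiag₁, neg_div]
  · have hdistinct : Function.Injective ![(1 : K), 0] := by
      simp [Function.Injective, Fin.forall_fin_two]
    have hoffdiag : ∀ j ≠ (0 : Fin 2), P₂ 0 j ≠ 0 := by
      simp [Fin.forall_fin_two, P₂, hs0, hfour]
    have hR_diag : Commute R (diagonal ![1, 0]) := diagonal_vec2 (1 : K) 0 ▸ hR₁
    exact eq_zero_or_one_of_isIdempotentElem_of_mem_range_scalar hR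
      (mem_range_scalar_of_commute_diagonal hdistinct hoffdiag hR_diag hR₂)

/-- The matrices `P₁ = [[1,0],[0,0]]`, `P₂ = [[1/4,√3/4],[√3/4,3/4]]`,
`P₃ = [[1/4,−√3/4],[−√3/4,3/4]]` are orthogonal projections on `ℂ²` with
`P₁ + P₂ + P₃ = (3/2)·I`, and the triple `(P₁,P₂,P₃)` is irreducible. -/
theorem stmt_12 :
    let P₁ : Matrix (Fin 2) (Fin 2) ℂ := !![1, 0; 0, 0]
    let P₂ : Matrix (Fin 2) (Fin 2) ℂ :=
      !![1/4, (Real.sqrt 3 : ℂ)/4; (Real.sqrt 3 : ℂ)/4, 3/4]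
    let P₃ : Matrix (Fin 2) (Fin 2) ℂ :=
      !![1/4, -(Real.sqrt 3 : ℂ)/4; -(Real.sqrt 3 : ℂ)/4, 3/4]
    (P₁ * P₁ = P₁ ∧ P₁ᴴ = P₁) ∧ (P₂ * P₂ = P₂ ∧ P₂ᴴ = P₂) ∧ (P₃ * P₃ = P₃ ∧ P₃ᴴ = P₃) ∧
    P₁ + P₂ + P₃ = (3/2 : ℂ) • (1 : Matrix (Fin 2) (Fin 2) ℂ) ∧
    (∀ R : Matrix (Fin 2) (Fin 2) ℂ, Rᴴ = R → R * R = R →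
      R * P₁ = P₁ * R → R * P₂ = P₂ * R → R * P₃ = P₃ * R →
      R = 0 ∨ R = 1) := by
  have hs : (Real.sqrt 3 : ℂ) ^ 2 = 3 := mod_cast Real.sq_sqrt (by norm_num : (0 : ℝ) ≤ 3)
  obtain ⟨h₁, h₂, h₃, hsum, hirr⟩ := stmt_12_general hs (Complex.conj_ofReal _)
  exact ⟨⟨h₁.1, h₁.2⟩, ⟨h₂.1, h₂.2⟩, ⟨h₃.1, h₃.2⟩, hsum, fun R _ hR hR₁ hR₂ _ => hirr R hR hR₁ hR₂⟩
end

section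
/- The mapping (a,b,c) ↦ λ = (b² − a²c²)/(1 − a²)² + i·(2abc)/(1 − a²)² is a bijection from the region Ω onto the complex plane with the points 0 and 1 removed. -/
/-!
On the sphere, `λ = ((b + i a c) / (1 - a²))²` and `λ - 1 = ((a b + i c) / (1 - a²))²`, whence
`‖λ‖ = (1 - c²) / (1 - a²)` and `‖λ - 1‖ = (1 - b²) / (1 - a²)`. The side lengths `1`, `‖λ - 1‖`,
`‖λ‖` of the triangle with vertices `0`, `1`, `λ` are therefore proportional to `1 - a²`, `1 - b²`,
`1 - c²`, which add up to `2`. So the perimeter of the triangle determines the factor, and its sides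
determine `a²`, `b²`, `c²`. Conversely, the triangle inequality makes the numbers so obtained
nonnegative. On `Ω` the coordinates `a` and `b` are nonnegative, and `c` is negative exactly when
`Im λ` is.
-/

/-- The region `Ω` on the unit sphere in `ℝ³`. -/
def OmegaRegion : Set (ℝ × ℝ × ℝ) :=
  {p | p.1 ^ 2 + p.2.1 ^ 2 + p.2.2 ^ 2 = 1 ∧
    ((0 < p.1 ∧ 0 < p.2.1 ∧ -1 < p.2.2 ∧ p.2.2 < 1) ∨
     (p.1 = 0 ∧ 0 < p.2.1 ∧ 0 < p.2.2) ∨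
     (p.2.1 = 0 ∧ 0 < p.1 ∧ 0 < p.2.2))}

open Complex

/-- The map `(a, b, c) ↦ λ`, on all of `ℝ³`, with the junk value `0` where `a² = 1`. -/
noncomputable def lambdaMap (p : ℝ × ℝ × ℝ) : ℂ :=
  (((p.2.1 ^ 2 - p.1 ^ 2 * p.2.2 ^ 2) / (1 - p.1 ^ 2) ^ 2 : ℝ) : ℂ) +
    (((2 * p.1 * p.2.1 * p.2.2) / (1 - p.1 ^ 2) ^ 2 : ℝ) : ℂ) * I

/-- The perimeter of the triangle with vertices `0`, `1` and `z`. -/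
noncomputable def trianglePerimeter (z : ℂ) : ℝ := 1 + ‖z‖ + ‖z - 1‖

/-- The inverse of `lambdaMap`: with `P` the perimeter of the triangle `0`, `1`, `z`, it is the
point `(a, b, c)` for which `1 - a²`, `1 - b²`, `1 - c²` are the sides `1`, `‖z - 1‖`, `‖z‖`
multiplied by `2 / P`, with `a, b ≥ 0`, and with `c ≥ 0` for `Im z ≥ 0` and `c ≤ 0` otherwise. -/
noncomputable def spherePoint (z : ℂ) : ℝ × ℝ × ℝ :=
  (√(1 - 2 / trianglePerimeter z),
    √(1 - 2 * ‖z - 1‖ / trianglePerimeter z),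
    (if 0 ≤ z.im then 1 else -1) * √(1 - 2 * ‖z‖ / trianglePerimeter z))

lemma mem_OmegaRegion_iff {p : ℝ × ℝ × ℝ} :
    p ∈ OmegaRegion ↔ p.1 ^ 2 + p.2.1 ^ 2 + p.2.2 ^ 2 = 1 ∧
      (p.1 ^ 2 < 1 ∧ p.2.1 ^ 2 < 1 ∧ p.2.2 ^ 2 < 1) ∧
      0 ≤ p.1 ∧ 0 ≤ p.2.1 ∧ (p.1 * p.2.1 = 0 → 0 ≤ p.2.2) := by
  obtain ⟨a, b, c⟩ := p
  simp only [OmegaRegion, Set.mem_ofPred_eq]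
  refine and_congr_right fun hsphere => ⟨?_, ?_⟩
  · rintro (⟨ha, hb, -, -⟩ | ⟨rfl, hb, hc⟩ | ⟨rfl, ha, hc⟩)
    · have hab : a * b ≠ 0 := (mul_pos ha hb).ne'
      refine ⟨⟨?_, ?_, ?_⟩, ha.le, hb.le, fun h => absurd h hab⟩ <;> nlinarith
    · refine ⟨⟨?_, ?_, ?_⟩, le_rfl, hb.le, fun _ => hc.le⟩ <;> nlinarith
    · refine ⟨⟨?_, ?_, ?_⟩, ha.le, le_rfl, fun _ => hc.le⟩ <;> nlinarith
  · rintro ⟨⟨ha1, hb1, hc1⟩, ha, hb, hc⟩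
    rcases ha.eq_or_lt with rfl | ha
    · have hc_pos : 0 < c := (hc (zero_mul b)).lt_of_ne (by rintro rfl; linarith)
      exact .inr (.inl ⟨rfl, hb.lt_of_ne (by rintro rfl; linarith), hc_pos⟩)
    rcases hb.eq_or_lt with rfl | hb
    · exact .inr (.inr ⟨rfl, ha, (hc (mul_zero a)).lt_of_ne (by rintro rfl; linarith)⟩)
    · exact .inl ⟨ha, hb, abs_lt.mp ((sq_lt_one_iff_abs_lt_one c).mp hc1)⟩

lemma norm_add_mul_I_div_sq (x y s : ℝ) :
    ‖((x + y * I) / s) ^ 2‖ = (x ^ 2 + y ^ 2) / s ^ 2 := by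
  rw [norm_pow, norm_div, div_pow, ← normSq_eq_norm_sq, normSq_add_mul_I, norm_real,
    Real.norm_eq_abs, sq_abs]

lemma eq_of_norm_sub_ofReal_eq {r s : ℝ} (hrs : r ≠ s) {z w : ℂ} (hr : ‖z - r‖ = ‖w - r‖)
    (hs : ‖z - s‖ = ‖w - s‖) (him : 0 ≤ z.im * w.im) : z = w := by
  have norm_sub_sq (u : ℂ) (t : ℝ) : ‖u - t‖ ^ 2 = (u.re - t) ^ 2 + u.im ^ 2 := by
    simp only [← normSq_eq_norm_sq, normSq_apply, sub_re, sub_im, ofReal_re, ofReal_im]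
    ring
  have hr_sq := congrArg (· ^ 2) hr
  have hs_sq := congrArg (· ^ 2) hs
  simp only [norm_sub_sq] at hr_sq hs_sq
  have hre : z.re = w.re :=
    mul_left_cancel₀ (sub_ne_zero.mpr hrs) (by linear_combination (hs_sq - hr_sq) / 2)
  have him_sq : z.im ^ 2 = w.im ^ 2 := by
    rw [hre] at hr_sq
    exact add_left_cancel hr_sq
  refine Complex.ext hre ?_
  rcases sq_eq_sq_iff_eq_or_eq_neg.mp him_sq with h | h
  · exact h
  · have hw : w.im ^ 2 = 0 := le_antisymm (by rw [h] at him; linarith) (sq_nonneg _)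
    rw [h, sq_eq_zero_iff.mp hw, neg_zero]

lemma lambdaMap_im (p : ℝ × ℝ × ℝ) :
    (lambdaMap p).im = 2 * p.1 * p.2.1 * p.2.2 / (1 - p.1 ^ 2) ^ 2 := by
  simp only [lambdaMap, add_im, ofReal_im, im_ofReal_mul, I_im, mul_one, zero_add]

lemma lambdaMap_eq_sq (p : ℝ × ℝ × ℝ) :
    lambdaMap p = ((p.2.1 + (p.1 * p.2.2 : ℝ) * I) / (1 - p.1 ^ 2 : ℝ)) ^ 2 := by
  rw [lambdaMap, div_pow, ofReal_div, ofReal_div, div_mul_eq_mul_div, ← add_div, ofReal_pow]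
  congr 1
  push_cast
  linear_combination -(p.1 * p.2.2 : ℂ) ^ 2 * I_sq

section LambdaMap

variable {p : ℝ × ℝ × ℝ}

lemma lambdaMap_sub_one_eq_sq (hp : p.1 ^ 2 + p.2.1 ^ 2 + p.2.2 ^ 2 = 1) (hp1 : p.1 ^ 2 ≠ 1) :
    lambdaMap p - 1 = (((p.1 * p.2.1 : ℝ) + p.2.2 * I) / (1 - p.1 ^ 2 : ℝ)) ^ 2 := by
  have hs : ((1 - p.1 ^ 2 : ℝ) : ℂ) ≠ 0 := ofReal_ne_zero.mpr (sub_ne_zero.mpr hp1.symm)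
  have hpC : (p.1 : ℂ) ^ 2 + (p.2.1 : ℂ) ^ 2 + (p.2.2 : ℂ) ^ 2 = 1 := mod_cast hp
  rw [lambdaMap_eq_sq, div_pow, div_pow, div_sub_one (pow_ne_zero 2 hs)]
  congr 1
  push_cast
  linear_combination (1 - (p.1 : ℂ) ^ 2) * hpC + (p.2.2 : ℂ) ^ 2 * ((p.1 : ℂ) ^ 2 - 1) * I_sq

lemma norm_lambdaMap (hp : p.1 ^ 2 + p.2.1 ^ 2 + p.2.2 ^ 2 = 1) (hp1 : p.1 ^ 2 ≠ 1) :
    ‖lambdaMap p‖ = (1 - p.2.2 ^ 2) / (1 - p.1 ^ 2) := by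
  have hs : 1 - p.1 ^ 2 ≠ 0 := sub_ne_zero.mpr hp1.symm
  rw [lambdaMap_eq_sq, norm_add_mul_I_div_sq, div_eq_div_iff (pow_ne_zero 2 hs) hs]
  linear_combination (1 - p.1 ^ 2) * hp

lemma norm_lambdaMap_sub_one (hp : p.1 ^ 2 + p.2.1 ^ 2 + p.2.2 ^ 2 = 1) (hp1 : p.1 ^ 2 ≠ 1) :
    ‖lambdaMap p - 1‖ = (1 - p.2.1 ^ 2) / (1 - p.1 ^ 2) := by
  have hs : 1 - p.1 ^ 2 ≠ 0 := sub_ne_zero.mpr hp1.symm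
  rw [lambdaMap_sub_one_eq_sq hp hp1, norm_add_mul_I_div_sq,
    div_eq_div_iff (pow_ne_zero 2 hs) hs]
  linear_combination (1 - p.1 ^ 2) * hp

lemma trianglePerimeter_lambdaMap (hp : p.1 ^ 2 + p.2.1 ^ 2 + p.2.2 ^ 2 = 1)
    (hp1 : p.1 ^ 2 ≠ 1) : trianglePerimeter (lambdaMap p) = 2 / (1 - p.1 ^ 2) := by
  have hs : 1 - p.1 ^ 2 ≠ 0 := sub_ne_zero.mpr hp1.symm
  rw [trianglePerimeter, norm_lambdaMap hp hp1, norm_lambdaMap_sub_one hp hp1,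
    one_add_div hs, ← add_div]
  congr 1
  linear_combination -hp

lemma lambdaMap_im_nonneg_iff (hp : p ∈ OmegaRegion) : 0 ≤ (lambdaMap p).im ↔ 0 ≤ p.2.2 := by
  obtain ⟨-, ⟨ha1, -, -⟩, ha, hb, hc⟩ := mem_OmegaRegion_iff.mp hp
  rw [lambdaMap_im, le_div_iff₀ (pow_pos (sub_pos.mpr ha1) 2), zero_mul, mul_assoc 2]
  rcases (mul_nonneg ha hb).eq_or_lt with hab | hab
  · simp only [← hab, mul_zero, zero_mul, le_refl, hc hab.symm]
  · exact mul_nonneg_iff_of_pos_left (mul_pos two_pos hab)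

lemma lambdaMap_mapsTo : Set.MapsTo lambdaMap OmegaRegion {z : ℂ | z ≠ 0 ∧ z ≠ 1} := by
  intro p hp
  obtain ⟨hsphere, ⟨ha1, hb1, hc1⟩, -⟩ := mem_OmegaRegion_iff.mp hp
  rw [Set.mem_ofPred_eq, ← norm_pos_iff, ← sub_ne_zero (b := (1 : ℂ)), ← norm_pos_iff,
    norm_lambdaMap hsphere ha1.ne, norm_lambdaMap_sub_one hsphere ha1.ne]
  exact ⟨div_pos (sub_pos.mpr hc1) (sub_pos.mpr ha1), div_pos (sub_pos.mpr hb1) (sub_pos.mpr ha1)⟩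

lemma spherePoint_leftInvOn_lambdaMap : Set.LeftInvOn spherePoint lambdaMap OmegaRegion := by
  intro p hp
  obtain ⟨hsphere, ⟨ha1, -, -⟩, ha, hb, -⟩ := mem_OmegaRegion_iff.mp hp
  have hs : 1 - p.1 ^ 2 ≠ 0 := (sub_pos.mpr ha1).ne'
  have rescale (t : ℝ) : 1 - 2 * ((1 - t ^ 2) / (1 - p.1 ^ 2)) / (2 / (1 - p.1 ^ 2)) = t ^ 2 := by
    field_simp
    ring
  have hc : (if 0 ≤ p.2.2 then 1 else -1) * |p.2.2| = p.2.2 := by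
    split_ifs with h
    · rw [one_mul, abs_of_nonneg h]
    · rw [neg_one_mul, abs_of_neg (not_le.mp h), neg_neg]
  simp only [spherePoint, trianglePerimeter_lambdaMap hsphere ha1.ne, norm_lambdaMap hsphere ha1.ne,
    norm_lambdaMap_sub_one hsphere ha1.ne, lambdaMap_im_nonneg_iff hp, rescale,
    div_div_cancel₀ (two_ne_zero (α := ℝ)), sub_sub_cancel, Real.sqrt_sq ha, Real.sqrt_sq hb,
    Real.sqrt_sq_eq_abs, hc]

end LambdaMap

section SpherePoint

variable (z : ℂ)

lemma trianglePerimeter_pos : 0 < trianglePerimeter z := by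
  unfold trianglePerimeter
  positivity

lemma spherePoint_fst_sq : (spherePoint z).1 ^ 2 = 1 - 2 / trianglePerimeter z := by
  refine Real.sq_sqrt (sub_nonneg.mpr ((div_le_one (trianglePerimeter_pos z)).mpr ?_))
  have triangle : ‖(1 : ℂ)‖ ≤ ‖z‖ + ‖z - 1‖ := by simpa using norm_sub_le z (z - 1)
  rw [norm_one] at triangle
  unfold trianglePerimeter
  linarith

lemma spherePoint_snd_fst_sq :
    (spherePoint z).2.1 ^ 2 = 1 - 2 * ‖z - 1‖ / trianglePerimeter z := by
  refine Real.sq_sqrt (sub_nonneg.mpr ((div_le_one (trianglePerimeter_pos z)).mpr ?_))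
  have triangle : ‖z - 1‖ ≤ ‖z‖ + ‖(1 : ℂ)‖ := norm_sub_le z 1
  rw [norm_one] at triangle
  unfold trianglePerimeter
  linarith

lemma spherePoint_snd_snd_sq :
    (spherePoint z).2.2 ^ 2 = 1 - 2 * ‖z‖ / trianglePerimeter z := by
  have hsign : (if 0 ≤ z.im then (1 : ℝ) else -1) ^ 2 = 1 := by split_ifs <;> norm_num
  rw [spherePoint, mul_pow, hsign, one_mul]
  refine Real.sq_sqrt (sub_nonneg.mpr ((div_le_one (trianglePerimeter_pos z)).mpr ?_))
  have triangle : ‖z‖ ≤ ‖z - 1‖ + ‖(1 : ℂ)‖ := by simpa using norm_add_le (z - 1) 1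
  rw [norm_one] at triangle
  unfold trianglePerimeter
  linarith

lemma spherePoint_mem_sphere :
    (spherePoint z).1 ^ 2 + (spherePoint z).2.1 ^ 2 + (spherePoint z).2.2 ^ 2 = 1 := by
  have hP := (trianglePerimeter_pos z).ne'
  rw [spherePoint_fst_sq, spherePoint_snd_fst_sq, spherePoint_snd_snd_sq]
  field_simp
  rw [trianglePerimeter]
  ring

lemma spherePoint_fst_sq_lt_one : (spherePoint z).1 ^ 2 < 1 := by
  rw [spherePoint_fst_sq]
  exact sub_lt_self 1 (div_pos two_pos (trianglePerimeter_pos z))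

lemma im_mul_spherePoint_snd_snd_nonneg : 0 ≤ z.im * (spherePoint z).2.2 := by
  simp only [spherePoint, ← mul_assoc]
  refine mul_nonneg ?_ (Real.sqrt_nonneg _)
  split_ifs with h
  · rwa [mul_one]
  · linarith

lemma lambdaMap_spherePoint : lambdaMap (spherePoint z) = z := by
  have hsphere := spherePoint_mem_sphere z
  have ha1 := (spherePoint_fst_sq_lt_one z).ne
  have hP := (trianglePerimeter_pos z).ne'
  have hnorm : ‖lambdaMap (spherePoint z)‖ = ‖z‖ := by
    rw [norm_lambdaMap hsphere ha1, spherePoint_fst_sq, spherePoint_snd_snd_sq]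
    field_simp
    ring
  have hnorm_sub_one : ‖lambdaMap (spherePoint z) - 1‖ = ‖z - 1‖ := by
    rw [norm_lambdaMap_sub_one hsphere ha1, spherePoint_fst_sq, spherePoint_snd_fst_sq]
    field_simp
    ring
  suffices him : 0 ≤ (lambdaMap (spherePoint z)).im * z.im from
    eq_of_norm_sub_ofReal_eq zero_ne_one (by simpa using hnorm) (by simpa using hnorm_sub_one) him
  have ha : 0 ≤ (spherePoint z).1 := Real.sqrt_nonneg _
  have hb : 0 ≤ (spherePoint z).2.1 := Real.sqrt_nonneg _
  have hc := im_mul_spherePoint_snd_snd_nonneg z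
  calc
    0 ≤ 2 * (spherePoint z).1 * (spherePoint z).2.1 * (z.im * (spherePoint z).2.2) /
        (1 - (spherePoint z).1 ^ 2) ^ 2 := by positivity
    _ = (lambdaMap (spherePoint z)).im * z.im := by
      rw [lambdaMap_im]
      ring

lemma spherePoint_mapsTo : Set.MapsTo spherePoint {z : ℂ | z ≠ 0 ∧ z ≠ 1} OmegaRegion := by
  rintro z ⟨hz0, hz1⟩
  have hP := trianglePerimeter_pos z
  refine mem_OmegaRegion_iff.mpr ⟨spherePoint_mem_sphere z,
    ⟨spherePoint_fst_sq_lt_one z, ?_, ?_⟩, Real.sqrt_nonneg _, Real.sqrt_nonneg _, fun hab => ?_⟩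
  · rw [spherePoint_snd_fst_sq]
    have := norm_pos_iff.mpr (sub_ne_zero.mpr hz1)
    exact sub_lt_self 1 (by positivity)
  · rw [spherePoint_snd_snd_sq]
    exact sub_lt_self 1 (by positivity)
  · have hz_im : z.im = 0 := by
      rw [← lambdaMap_spherePoint z, lambdaMap_im, mul_assoc 2, hab, mul_zero, zero_mul, zero_div]
    simp only [spherePoint, hz_im, le_refl, if_true, one_mul]
    exact Real.sqrt_nonneg _

end SpherePoint

/-- The mapping `(a,b,c) ↦ λ = (b²−a²c²)/(1−a²)² + i·2abc/(1−a²)²` is a bijection from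
`Ω` onto `ℂ \ {0, 1}`. -/
theorem stmt_14 :
    Set.BijOn
      (fun p : ℝ × ℝ × ℝ =>
        (((p.2.1 ^ 2 - p.1 ^ 2 * p.2.2 ^ 2) / (1 - p.1 ^ 2) ^ 2 : ℝ) : ℂ) +
          (((2 * p.1 * p.2.1 * p.2.2) / (1 - p.1 ^ 2) ^ 2 : ℝ) : ℂ) * Complex.I)
      OmegaRegion {z : ℂ | z ≠ 0 ∧ z ≠ 1} := by
  exact Set.InvOn.bijOn
    ⟨spherePoint_leftInvOn_lambdaMap, fun z _ => lambdaMap_spherePoint z⟩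
    lambdaMap_mapsTo spherePoint_mapsTo
end

section
/- For (a,b,c) ∈ ℝ³ with a² + b² + c² = 1, the four 2×2 matrices P_1 = (1/2)[[1+a, −b−ic],[−b+ic, 1−a]], P_2 = (1/2)[[1−a, b−ic],[b+ic, 1+a]], P_3 = (1/2)[[1−a, −b+ic],[−b−ic, 1+a]], P_4 = (1/2)[[1+a, b+ic],[b−ic, 1−a]] are orthogonal projections (self-adjoint idempotents) on ℂ² satisfying P_1 + P_2 + P_3 + P_4 = 2·I. Moreover, if (a,b,c) ∈ Ω, then the quadruple (P_1, P_2, P_3, P_4) is irreducible: the only self-adjoint idempotent 2×2 matrices commuting with all four P_i are 0 and I. -/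
/-!
Put `σ v = v₀ X + v₁ Y + v₂ Z` with the Pauli matrices `X, Y, Z`. The four matrices are
`(1 + σ v) / 2` for the unit vectors `v = (-b, c, a), (b, c, -a), (-b, -c, -a), (b, -c, a)`, which
sum to zero. Since `σ v ^ 2 = 1` for a unit vector `v`, they are projections. Every `2 × 2` matrix
is `t + σ u`, and it commutes with `σ v` exactly when `u × v = 0`; so a matrix commuting with `σ v`
and `σ w` for non-parallel `v`, `w` is scalar. As soon as two of `a, b, c` are nonzero, the first of
the four vectors is not parallel to one of the others.
-/

open Matrix Complex

theorem isStarProjection_half_smul_one_add {𝕜 A : Type*} [Field 𝕜] [StarRing 𝕜] [Ring A]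
    [StarRing A] [Algebra 𝕜 A] [StarModule 𝕜 A] {u : A} (hu : IsSelfAdjoint u) (hsq : u * u = 1) :
    IsStarProjection ((2⁻¹ : 𝕜) • (1 + u)) where
  isIdempotentElem := by
    have hmul : (1 + u) * (1 + u) = (2 : 𝕜) • (1 + u) := by
      rw [two_smul, mul_add, add_mul, add_mul, hsq]
      noncomm_ring
    have hscalar : (2⁻¹ : 𝕜) * 2⁻¹ * 2 = 2⁻¹ := by
      simpa [mul_right_comm] using mul_inv_mul_cancel (2⁻¹ : 𝕜)
    rw [IsIdempotentElem, smul_mul_smul_comm, hmul, smul_smul, hscalar]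
  isSelfAdjoint := .smul (by simp [IsSelfAdjoint]) (.add (.one A) hu)

theorem eq_zero_or_eq_one_of_isIdempotentElem_smul_one {F A : Type*} [Field F] [Ring A]
    [Algebra F A] {t : F} (h : IsIdempotentElem (t • (1 : A))) :
    t • (1 : A) = 0 ∨ t • (1 : A) = 1 := by
  have hprod : t • (t - 1) • (1 : A) = 0 := by
    rw [sub_smul, one_smul, smul_sub, sub_eq_zero]
    simpa [IsIdempotentElem] using h
  rcases smul_eq_zero.mp hprod with rfl | ht
  · exact .inl (zero_smul F 1)
  · exact .inr (by rwa [sub_smul, one_smul, sub_eq_zero] at ht)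

theorem eq_zero_of_cross_eq_zero {F : Type*} [Field F] {u v w : Fin 3 → F} (hvw : v ⨯₃ w ≠ 0)
    (hv : u ⨯₃ v = 0) (hw : u ⨯₃ w = 0) : u = 0 := by
  by_contra hu
  have exists_smul_eq {x : Fin 3 → F} (hx : u ⨯₃ x = 0) : ∃ s : F, s • u = x := by
    rwa [← not_ne_iff, crossProduct_ne_zero_iff_linearIndependent, LinearIndependent.pair_iff' hu,
      not_forall_not] at hx
  obtain ⟨s, rfl⟩ := exists_smul_eq hv
  obtain ⟨t, rfl⟩ := exists_smul_eq hw
  exact hvw (by simp)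

/-- The combination `v₀ X + v₁ Y + v₂ Z` of the Pauli matrices, for complex coefficients `v`. -/
def pauliVector : (Fin 3 → ℂ) →ₗ[ℂ] Matrix (Fin 2) (Fin 2) ℂ where
  toFun v := !![v 2, v 0 - v 1 * I; v 0 + v 1 * I, -v 2]
  map_add' v w := by
    ext i j
    fin_cases i <;> fin_cases j <;> simp <;> ring
  map_smul' t v := by
    ext i j
    fin_cases i <;> fin_cases j <;> simp <;> ring

theorem pauliVector_apply (v : Fin 3 → ℂ) :
    pauliVector v = !![v 2, v 0 - v 1 * I; v 0 + v 1 * I, -v 2] := rfl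

theorem pauliVector_mul (v w : Fin 3 → ℂ) :
    pauliVector v * pauliVector w = (v ⬝ᵥ w) • 1 + I • pauliVector (v ⨯₃ w) := by
  ext i j
  fin_cases i <;> fin_cases j <;>
    simp [pauliVector_apply, cross_apply, vec3_dotProduct] <;> grind [I_mul_I]

theorem star_pauliVector (v : Fin 3 → ℂ) : star (pauliVector v) = pauliVector (star v) := by
  ext i j
  fin_cases i <;> fin_cases j <;> simp [pauliVector_apply, star_apply, sub_eq_add_neg]

theorem pauliVector_injective : Function.Injective pauliVector := by
  rw [injective_iff_map_eq_zero]
  intro v hv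
  rw [pauliVector_apply] at hv
  have h2 : v 2 = 0 := congr_fun₂ hv 0 0
  have hsub : v 0 - v 1 * I = 0 := congr_fun₂ hv 0 1
  have hadd : v 0 + v 1 * I = 0 := congr_fun₂ hv 1 0
  have h0 : v 0 = 0 := by linear_combination (hsub + hadd) / 2
  have h1 : v 1 = 0 := by simpa [h0] using hadd
  ext i
  fin_cases i <;> assumption

theorem exists_eq_smul_one_add_pauliVector (M : Matrix (Fin 2) (Fin 2) ℂ) :
    ∃ (t : ℂ) (u : Fin 3 → ℂ), M = t • 1 + pauliVector u := by
  refine ⟨(M 0 0 + M 1 1) / 2,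
    ![(M 0 1 + M 1 0) / 2, (M 0 1 - M 1 0) / 2 * I, (M 0 0 - M 1 1) / 2], ?_⟩
  ext i j
  fin_cases i <;> fin_cases j <;> simp [pauliVector_apply, mul_assoc] <;> ring

theorem commute_pauliVector_iff {v w : Fin 3 → ℂ} :
    Commute (pauliVector v) (pauliVector w) ↔ v ⨯₃ w = 0 := by
  have hcomm : pauliVector v * pauliVector w - pauliVector w * pauliVector v =
      (2 * I) • pauliVector (v ⨯₃ w) := by
    rw [pauliVector_mul, pauliVector_mul, dotProduct_comm w v, ← cross_anticomm v w, map_neg]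
    module
  rw [commute_iff_eq, ← sub_eq_zero, hcomm, smul_eq_zero_iff_right (by simp),
    map_eq_zero_iff _ pauliVector_injective]

theorem exists_eq_smul_one_of_commute_pauliVector {v w : Fin 3 → ℂ} (hvw : v ⨯₃ w ≠ 0)
    {M : Matrix (Fin 2) (Fin 2) ℂ} (hv : Commute M (pauliVector v))
    (hw : Commute M (pauliVector w)) : ∃ t : ℂ, M = t • 1 := by
  obtain ⟨t, u, rfl⟩ := exists_eq_smul_one_add_pauliVector M
  have cross_eq_zero {x : Fin 3 → ℂ} (hx : Commute (t • 1 + pauliVector u) (pauliVector x)) :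
      u ⨯₃ x = 0 :=
    commute_pauliVector_iff.mp (by
      simpa using hx.sub_left ((Commute.one_left (pauliVector x)).smul_left t))
  have hu : u = 0 := eq_zero_of_cross_eq_zero hvw (cross_eq_zero hv) (cross_eq_zero hw)
  exact ⟨t, by rw [hu, map_zero, add_zero]⟩

/-- The matrix `(1 + v₀ X + v₁ Y + v₂ Z) / 2` with Bloch vector `v`. It is an orthogonal projection
when `v` is a real unit vector; complex `v` are allowed so that `pauliVector` applies. -/
noncomputable def blochProjection (v : Fin 3 → ℂ) : Matrix (Fin 2) (Fin 2) ℂ :=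
  (2⁻¹ : ℂ) • (1 + pauliVector v)

theorem blochProjection_eq_smul (v : Fin 3 → ℂ) :
    blochProjection v =
      (1 / 2 : ℂ) • !![1 + v 2, v 0 - v 1 * I; v 0 + v 1 * I, 1 - v 2] := by
  simp [blochProjection, pauliVector_apply, one_fin_two, sub_eq_add_neg]

theorem isStarProjection_blochProjection {v : Fin 3 → ℂ} (hreal : IsSelfAdjoint v)
    (hunit : v ⬝ᵥ v = 1) : IsStarProjection (blochProjection v) :=
  isStarProjection_half_smul_one_add (by rw [IsSelfAdjoint, star_pauliVector, hreal.star_eq])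
    (by rw [pauliVector_mul, hunit, cross_self, map_zero, smul_zero, add_zero, one_smul])

theorem sum_blochProjection {ι : Type*} [Fintype ι] {v : ι → Fin 3 → ℂ} (hv : ∑ i, v i = 0) :
    ∑ i, blochProjection (v i) = (Fintype.card ι / 2 : ℂ) • 1 := by
  simp only [blochProjection]
  rw [← Finset.smul_sum, Finset.sum_add_distrib, ← map_sum, hv, map_zero, add_zero,
    Finset.sum_const, Finset.card_univ, ← Nat.cast_smul_eq_nsmul ℂ, smul_smul, inv_mul_eq_div]

theorem commute_blochProjection_iff {M : Matrix (Fin 2) (Fin 2) ℂ} {v : Fin 3 → ℂ} :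
    Commute M (blochProjection v) ↔ Commute M (pauliVector v) := by
  rw [blochProjection, Commute.smul_right_iff₀ (by norm_num)]
  exact ⟨fun h => by simpa using h.sub_right (.one_right M), (Commute.one_right M).add_right⟩

/-- The Bloch vectors of the projections `P₁, P₂, P₃, P₄` of the theorem, indexed from `0`. -/
def quadrupleBlochVector (a b c : ℝ) : Fin 4 → Fin 3 → ℂ :=
  ![![-b, c, a], ![b, c, -a], ![-b, -c, -a], ![b, -c, a]]

theorem isSelfAdjoint_quadrupleBlochVector (a b c : ℝ) (i : Fin 4) :
    IsSelfAdjoint (quadrupleBlochVector a b c i) := by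
  ext j
  fin_cases i <;> fin_cases j <;> simp [quadrupleBlochVector]

theorem quadrupleBlochVector_dotProduct_self (a b c : ℝ) (i : Fin 4) :
    quadrupleBlochVector a b c i ⬝ᵥ quadrupleBlochVector a b c i = (a ^ 2 + b ^ 2 + c ^ 2 : ℝ) := by
  fin_cases i <;> simp [quadrupleBlochVector] <;> ring

theorem sum_quadrupleBlochVector (a b c : ℝ) : ∑ i, quadrupleBlochVector a b c i = 0 := by
  ext j
  fin_cases j <;> simp [quadrupleBlochVector, Fin.sum_univ_four]

theorem exists_cross_quadrupleBlochVector_ne_zero {a b c : ℝ}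
    (h : (a ≠ 0 ∧ b ≠ 0) ∨ (b ≠ 0 ∧ c ≠ 0) ∨ (c ≠ 0 ∧ a ≠ 0)) :
    ∃ i, quadrupleBlochVector a b c 0 ⨯₃ quadrupleBlochVector a b c i ≠ 0 := by
  have cross_one : quadrupleBlochVector a b c 0 ⨯₃ quadrupleBlochVector a b c 1 =
      (2 : ℂ) • ![-(c * a : ℂ), 0, -(b * c)] := by
    ext j
    fin_cases j <;> simp [quadrupleBlochVector, cross_apply] <;> ring
  have cross_two : quadrupleBlochVector a b c 0 ⨯₃ quadrupleBlochVector a b c 2 =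
      (2 : ℂ) • ![0, -(a * b : ℂ), b * c] := by
    ext j
    fin_cases j <;> simp [quadrupleBlochVector, cross_apply] <;> ring
  have cross_three : quadrupleBlochVector a b c 0 ⨯₃ quadrupleBlochVector a b c 3 =
      (2 : ℂ) • ![(c * a : ℂ), a * b, 0] := by
    ext j
    fin_cases j <;> simp [quadrupleBlochVector, cross_apply] <;> ring
  rcases h with ⟨ha, hb⟩ | ⟨hb, hc⟩ | ⟨hc, ha⟩
  · exact ⟨3, by simp [cross_three, ha, hb]⟩
  · exact ⟨2, by simp [cross_two, hb, hc]⟩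
  · exact ⟨1, by simp [cross_one, hc, ha]⟩

theorem isStarProjection_blochProjection_quadruple {a b c : ℝ} (h : a ^ 2 + b ^ 2 + c ^ 2 = 1)
    (i : Fin 4) : IsStarProjection (blochProjection (quadrupleBlochVector a b c i)) :=
  isStarProjection_blochProjection (isSelfAdjoint_quadrupleBlochVector a b c i)
    (by rw [quadrupleBlochVector_dotProduct_self, h, ofReal_one])

theorem exists_eq_smul_one_of_commute_quadruple {a b c : ℝ}
    (h : (a ≠ 0 ∧ b ≠ 0) ∨ (b ≠ 0 ∧ c ≠ 0) ∨ (c ≠ 0 ∧ a ≠ 0)) {R : Matrix (Fin 2) (Fin 2) ℂ}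
    (hR : ∀ i, Commute R (blochProjection (quadrupleBlochVector a b c i))) :
    ∃ t : ℂ, R = t • 1 := by
  obtain ⟨i, hi⟩ := exists_cross_quadrupleBlochVector_ne_zero h
  exact exists_eq_smul_one_of_commute_pauliVector hi (commute_blochProjection_iff.mp (hR 0))
    (commute_blochProjection_iff.mp (hR i))

theorem stmt_15_general (a b c : ℝ) (hsph : a ^ 2 + b ^ 2 + c ^ 2 = 1) :
    let P₁ : Matrix (Fin 2) (Fin 2) ℂ :=
      (1/2 : ℂ) • !![1 + (a : ℂ), -(b : ℂ) - (c : ℂ) * I;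
                     -(b : ℂ) + (c : ℂ) * I, 1 - (a : ℂ)]
    let P₂ : Matrix (Fin 2) (Fin 2) ℂ :=
      (1/2 : ℂ) • !![1 - (a : ℂ), (b : ℂ) - (c : ℂ) * I;
                     (b : ℂ) + (c : ℂ) * I, 1 + (a : ℂ)]
    let P₃ : Matrix (Fin 2) (Fin 2) ℂ :=
      (1/2 : ℂ) • !![1 - (a : ℂ), -(b : ℂ) + (c : ℂ) * I;
                     -(b : ℂ) - (c : ℂ) * I, 1 + (a : ℂ)]
    let P₄ : Matrix (Fin 2) (Fin 2) ℂ :=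
      (1/2 : ℂ) • !![1 + (a : ℂ), (b : ℂ) + (c : ℂ) * I;
                     (b : ℂ) - (c : ℂ) * I, 1 - (a : ℂ)]
    ((P₁ * P₁ = P₁ ∧ P₁ᴴ = P₁) ∧ (P₂ * P₂ = P₂ ∧ P₂ᴴ = P₂) ∧
     (P₃ * P₃ = P₃ ∧ P₃ᴴ = P₃) ∧ (P₄ * P₄ = P₄ ∧ P₄ᴴ = P₄) ∧
     P₁ + P₂ + P₃ + P₄ = (2 : ℂ) • (1 : Matrix (Fin 2) (Fin 2) ℂ)) ∧
    ((a ≠ 0 ∧ b ≠ 0) ∨ (b ≠ 0 ∧ c ≠ 0) ∨ (c ≠ 0 ∧ a ≠ 0) →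
      ∀ R : Matrix (Fin 2) (Fin 2) ℂ,
        R * P₁ = P₁ * R → R * P₂ = P₂ * R → R * P₃ = P₃ * R → R * P₄ = P₄ * R →
        ∃ t : ℂ, R = t • 1) := by
  intro P₁ P₂ P₃ P₄
  have hP₁ : P₁ = blochProjection (quadrupleBlochVector a b c 0) := by
    simp [P₁, blochProjection_eq_smul, quadrupleBlochVector]
  have hP₂ : P₂ = blochProjection (quadrupleBlochVector a b c 1) := by
    simp [P₂, blochProjection_eq_smul, quadrupleBlochVector, sub_eq_add_neg]
  have hP₃ : P₃ = blochProjection (quadrupleBlochVector a b c 2) := by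
    simp [P₃, blochProjection_eq_smul, quadrupleBlochVector, sub_eq_add_neg]
  have hP₄ : P₄ = blochProjection (quadrupleBlochVector a b c 3) := by
    simp [P₄, blochProjection_eq_smul, quadrupleBlochVector, sub_eq_add_neg]
  clear_value P₁ P₂ P₃ P₄
  subst hP₁ hP₂ hP₃ hP₄
  have hproj (i : Fin 4) :=
    isStarProjection_iff'.mp (isStarProjection_blochProjection_quadruple hsph i)
  refine ⟨⟨hproj 0, hproj 1, hproj 2, hproj 3, ?_⟩, fun h R h₁ h₂ h₃ h₄ => ?_⟩
  · rw [← Fin.sum_univ_four (fun i => blochProjection (quadrupleBlochVector a b c i)),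
      sum_blochProjection (sum_quadrupleBlochVector a b c)]
    norm_num
  · refine exists_eq_smul_one_of_commute_quadruple h fun i => ?_
    fin_cases i
    exacts [h₁, h₂, h₃, h₄]

/-- For `(a,b,c)` on the unit sphere in `ℝ³`, the four matrices `P₁, P₂, P₃, P₄` are
orthogonal projections on `ℂ²` summing to `2·I`; moreover, if `(a,b,c) ∈ Ω`, the
quadruple is irreducible. -/
theorem stmt_15 (a b c : ℝ) (hsph : a ^ 2 + b ^ 2 + c ^ 2 = 1) :
    let P₁ : Matrix (Fin 2) (Fin 2) ℂ :=
      (1/2 : ℂ) • !![1 + (a : ℂ), -(b : ℂ) - (c : ℂ) * I;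
                     -(b : ℂ) + (c : ℂ) * I, 1 - (a : ℂ)]
    let P₂ : Matrix (Fin 2) (Fin 2) ℂ :=
      (1/2 : ℂ) • !![1 - (a : ℂ), (b : ℂ) - (c : ℂ) * I;
                     (b : ℂ) + (c : ℂ) * I, 1 + (a : ℂ)]
    let P₃ : Matrix (Fin 2) (Fin 2) ℂ :=
      (1/2 : ℂ) • !![1 - (a : ℂ), -(b : ℂ) + (c : ℂ) * I;
                     -(b : ℂ) - (c : ℂ) * I, 1 + (a : ℂ)]
    let P₄ : Matrix (Fin 2) (Fin 2) ℂ :=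
      (1/2 : ℂ) • !![1 + (a : ℂ), (b : ℂ) + (c : ℂ) * I;
                     (b : ℂ) - (c : ℂ) * I, 1 - (a : ℂ)]
    ((P₁ * P₁ = P₁ ∧ P₁ᴴ = P₁) ∧ (P₂ * P₂ = P₂ ∧ P₂ᴴ = P₂) ∧
     (P₃ * P₃ = P₃ ∧ P₃ᴴ = P₃) ∧ (P₄ * P₄ = P₄ ∧ P₄ᴴ = P₄) ∧
     P₁ + P₂ + P₃ + P₄ = (2 : ℂ) • (1 : Matrix (Fin 2) (Fin 2) ℂ)) ∧
    (((0 < a ∧ 0 < b ∧ -1 < c ∧ c < 1) ∨ (a = 0 ∧ 0 < b ∧ 0 < c) ∨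
      (b = 0 ∧ 0 < a ∧ 0 < c)) →
      ∀ R : Matrix (Fin 2) (Fin 2) ℂ, Rᴴ = R → R * R = R →
        R * P₁ = P₁ * R → R * P₂ = P₂ * R → R * P₃ = P₃ * R → R * P₄ = P₄ * R →
        R = 0 ∨ R = 1) := by
  refine ⟨(stmt_15_general a b c hsph).1, fun hΩ R _ hR h₁ h₂ h₃ h₄ => ?_⟩
  obtain ⟨t, rfl⟩ := (stmt_15_general a b c hsph).2 (by grind) R h₁ h₂ h₃ h₄
  exact eq_zero_or_eq_one_of_isIdempotentElem_smul_one hR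
end
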